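/- arXiv:1903.00750 — 5 statements merged into one kernel-verified Lean document; each statement's English description precedes it below -/
import Mathlib

section
/- Let G be a simple graph on a nonempty finite vertex set V with no isolated vertices, and let w assign a real weight to each edge of G. Then there exists an edge cover F of G such that (i) the maximum weight of an edge of F equals max over vertices v of (min over edges e of G incident to v of w(e)), i.e., F is bottleneck-optimal among all edge covers, and (ii) every edge of F has an endpoint that belongs to no other edge of F (so the connected components of the graph (V,F) are stars). -/
/-- `F` is an edge cover of the simple graph `G`: a set of edges of `G` such that
every vertex belongs to at least one edge of `F`. -/
def IsEdgeCover {V : Type*} (G : SimpleGraph V) (F : Set (Sym2 V)) : Prop :=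
  F ⊆ G.edgeSet ∧ ∀ v : V, ∃ e ∈ F, v ∈ e

/-!
Write `M` for the maximum over `v` of the least weight of an edge at `v`. The edges of weight at
most `M` form an edge cover, since they contain a lightest edge at every vertex; any edge cover has
an edge of weight at least `M`, namely one at a vertex where the maximum is attained. Hence every
edge cover made of edges of weight at most `M` is bottleneck-optimal, and one may take such a cover
that is minimal for inclusion. In a minimal cover each edge has an endpoint on no other edge,
for otherwise the edge could be deleted.
-/

namespace IsEdgeCover

variable {V : Type*} {G : SimpleGraph V} {F : Set (Sym2 V)} {e : Sym2 V}

theorem sdiff_singleton (hF : IsEdgeCover G F) (he : ∀ v ∈ e, ∃ e' ∈ F, v ∈ e' ∧ e' ≠ e) :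
    IsEdgeCover G (F \ {e}) := by
  refine ⟨Set.sdiff_subset.trans hF.1, fun v => ?_⟩
  by_cases hve : v ∈ e
  · obtain ⟨e', he'F, hve', hne⟩ := he v hve
    exact ⟨e', ⟨he'F, hne⟩, hve'⟩
  · obtain ⟨e', he'F, hve'⟩ := hF.2 v
    exact ⟨e', ⟨he'F, fun h : e' = e => hve (h ▸ hve')⟩, hve'⟩

theorem exists_minimal_subset (hF : IsEdgeCover G F) (hfin : F.Finite) :
    ∃ F' ⊆ F, Minimal (IsEdgeCover G) F' := by
  have hfin' : {K | K ⊆ F ∧ IsEdgeCover G K}.Finite := hfin.finite_subsets.subset fun _ hK => hK.1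
  obtain ⟨F', hF'F, hmin⟩ := hfin'.exists_le_minimal ⟨Set.Subset.rfl, hF⟩
  exact ⟨F', hF'F, hmin.prop.2, fun _ hK hKF' => hmin.le_of_le ⟨hKF'.trans hF'F, hK⟩ hKF'⟩

theorem exists_mem_forall_eq_of_minimal (hF : Minimal (IsEdgeCover G) F) (he : e ∈ F) :
    ∃ v ∈ e, ∀ e' ∈ F, v ∈ e' → e' = e := by
  by_contra! hshared
  exact (hF.le_of_le (hF.prop.sdiff_singleton hshared) Set.sdiff_subset he).2 rfl

end IsEdgeCover

section BottleneckWeight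

variable {V α : Type*} [ConditionallyCompleteLattice α] {G : SimpleGraph V} {F : Set (Sym2 V)}
  {w : Sym2 V → α}

/-- The bottleneck weight of a weighted graph: the supremum over the vertices of the infimum of the
weights of the incident edges. In a finite nonempty graph without isolated vertices, with linearly
ordered weights, it is the least possible value of the largest edge weight of an edge cover. An
isolated vertex contributes the junk value `sInf ∅`. -/
noncomputable def bottleneckWeight (G : SimpleGraph V) (w : Sym2 V → α) : α :=
  ⨆ v, sInf (w '' G.incidenceSet v)

theorem bottleneckWeight_eq_iSup_sInf_setOf (G : SimpleGraph V) (w : Sym2 V → α) :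
    bottleneckWeight G w = ⨆ v, sInf {x | ∃ e ∈ G.edgeSet, v ∈ e ∧ x = w e} := by
  simp only [bottleneckWeight, Set.image, SimpleGraph.incidenceSet, Set.mem_ofPred_eq,
    and_assoc, eq_comm]

theorem IsEdgeCover.bottleneckWeight_le_sSup [Nonempty V] (hF : IsEdgeCover G F)
    (hbelow : ∀ v, BddBelow (w '' G.incidenceSet v)) (habove : BddAbove (w '' F)) :
    bottleneckWeight G w ≤ sSup (w '' F) := by
  refine ciSup_le fun v => ?_
  obtain ⟨e, heF, hve⟩ := hF.2 v
  calc sInf (w '' G.incidenceSet v)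
      ≤ w e := csInf_le (hbelow v) (Set.mem_image_of_mem w ⟨hF.1 heF, hve⟩)
    _ ≤ sSup (w '' F) := le_csSup habove (Set.mem_image_of_mem w heF)

theorem isEdgeCover_setOf_le_bottleneckWeight
    (hmin : ∀ v, sInf (w '' G.incidenceSet v) ∈ w '' G.incidenceSet v)
    (hbdd : BddAbove (Set.range fun v => sInf (w '' G.incidenceSet v))) :
    IsEdgeCover G {e ∈ G.edgeSet | w e ≤ bottleneckWeight G w} := by
  refine ⟨Set.sep_subset _ _, fun v => ?_⟩
  obtain ⟨e, ⟨heG, hve⟩, hwe⟩ := hmin v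
  exact ⟨e, ⟨heG, hwe.trans_le (le_ciSup hbdd v)⟩, hve⟩

end BottleneckWeight

theorem bottleneck_star_edge_cover_exists_general {V α : Type*} [Finite V] [Nonempty V]
    [ConditionallyCompleteLinearOrder α] (G : SimpleGraph V)
    (hiso : ∀ v : V, ∃ u : V, G.Adj v u) (w : Sym2 V → α) :
    ∃ F : Set (Sym2 V), IsEdgeCover G F ∧ sSup (w '' F) = bottleneckWeight G w ∧
      ∀ e ∈ F, ∃ v ∈ e, ∀ e' ∈ F, v ∈ e' → e' = e := by
  have hmin (v : V) : sInf (w '' G.incidenceSet v) ∈ w '' G.incidenceSet v := by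
    obtain ⟨u, huv⟩ := hiso v
    have hne : (G.incidenceSet v).Nonempty := ⟨s(v, u), huv, Sym2.mem_mk_left v u⟩
    exact (hne.image w).csInf_mem (Set.toFinite _)
  have hlight := isEdgeCover_setOf_le_bottleneckWeight hmin (Set.finite_range _).bddAbove
  obtain ⟨F, hFlight, hFmin⟩ := hlight.exists_minimal_subset (Set.toFinite _)
  have hFne : F.Nonempty := (hFmin.prop.2 (Classical.arbitrary V)).imp fun _ h => h.1
  have hle : sSup (w '' F) ≤ bottleneckWeight G w :=
    csSup_le (hFne.image w) (Set.forall_mem_image.2 fun _ he => (hFlight he).2)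
  have hge : bottleneckWeight G w ≤ sSup (w '' F) :=
    hFmin.prop.bottleneckWeight_le_sSup (fun _ => (Set.toFinite _).bddBelow)
      (Set.toFinite _).bddAbove
  exact ⟨F, hFmin.prop, hle.antisymm hge,
    fun _ he => IsEdgeCover.exists_mem_forall_eq_of_minimal hFmin he⟩

/-- There is an edge cover `F` of `G` that is bottleneck-optimal (its maximum edge weight
equals the max over vertices of the min weight of an incident edge) and such that every edge
of `F` has an endpoint belonging to no other edge of `F` (the components of `(V,F)` are stars). -/
theorem bottleneck_star_edge_cover_exists {V : Type*} [Fintype V] [Nonempty V]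
    (G : SimpleGraph V) (hiso : ∀ v : V, ∃ u : V, G.Adj v u) (w : Sym2 V → ℝ) :
    ∃ F : Set (Sym2 V), IsEdgeCover G F ∧
      sSup (w '' F) = (⨆ v : V, sInf {x : ℝ | ∃ e ∈ G.edgeSet, v ∈ e ∧ x = w e}) ∧
      ∀ e ∈ F, ∃ v ∈ e, ∀ e' ∈ F, v ∈ e' → e' = e := by
  rw [← bottleneckWeight_eq_iSup_sInf_setOf]
  exact bottleneck_star_edge_cover_exists_general G hiso w
end

section
/- Let (V,d) be a nonempty finite metric space, let G be a simple graph on V with no isolated vertices, and let k ≥ 1. Let b = max over vertices v of (min over G-neighbors u of v of d(u,v)), and let R be the minimum radius over all k-clusterings of (V,d). Then there exists a k-clustering (σ, c) of (V,d) such that every vertex v has a G-neighbor u with σ(u) = σ(v), and whose radius is at most b + R. -/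
/-!
An inclusion-minimal edge cover is a disjoint union of stars: every edge of it has an endpoint
covered by no other edge, so its opposite endpoint can serve as a center, and the centers of
intersecting edges agree. Start from the cover formed by joining each vertex to a nearest
`G`-neighbor, whose edges have length at most the bottleneck distance `b`, and thin it out to a
minimal one. Letting each vertex follow the center of its star into that center's cluster of an
optimal `k`-center solution keeps the stars together, and by the triangle inequality moves no
vertex more than `b` further from its cluster center.
-/

section EdgeCover

variable {V : Type*} {G : SimpleGraph V} {F : Set (Sym2 V)} {e : Sym2 V}

theorem isEdgeCover_range {g : V → V} (hg : ∀ v, G.Adj v (g v)) :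
    IsEdgeCover G (Set.range fun v => s(v, g v)) :=
  ⟨Set.range_subset_iff.2 hg, fun v => ⟨_, ⟨v, rfl⟩, Sym2.mem_mk_left v (g v)⟩⟩

theorem IsEdgeCover.exists_mk_mem (hF : IsEdgeCover G F) (v : V) : ∃ u, s(v, u) ∈ F := by
  obtain ⟨e, he, u, rfl⟩ := hF.2 v
  exact ⟨u, he⟩

theorem IsEdgeCover.sdiff_singleton_s4 (hF : IsEdgeCover G F)
    (he : ∀ v ∈ e, ∃ e' ∈ F, v ∈ e' ∧ e' ≠ e) : IsEdgeCover G (F \ {e}) := by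
  refine ⟨Set.sdiff_subset.trans hF.1, fun v => ?_⟩
  by_cases hv : v ∈ e
  · obtain ⟨e', he', hve', hne⟩ := he v hv
    exact ⟨e', ⟨he', hne⟩, hve'⟩
  · obtain ⟨e', he', hve'⟩ := hF.2 v
    exact ⟨e', ⟨he', fun h : e' = e => hv (h ▸ hve')⟩, hve'⟩

theorem IsEdgeCover.exists_mem_forall_eq_of_minimal_s4 (hF : Minimal (IsEdgeCover G) F)
    (he : e ∈ F) : ∃ v ∈ e, ∀ e' ∈ F, v ∈ e' → e' = e := by
  by_contra! h
  exact (hF.le_of_le (hF.prop.sdiff_singleton_s4 h) Set.sdiff_subset he).2 rfl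

theorem IsEdgeCover.exists_center_of_minimal (hF : Minimal (IsEdgeCover G) F) (he : e ∈ F) :
    ∃ c ∈ e, ∀ v ∈ e, v ≠ c → ∀ e' ∈ F, v ∈ e' → e' = e := by
  obtain ⟨w, ⟨c, rfl⟩, hw⟩ := exists_mem_forall_eq_of_minimal_s4 hF he
  refine ⟨c, Sym2.mem_mk_right w c, fun v hv hvc => ?_⟩
  obtain rfl := (Sym2.mem_iff.1 hv).resolve_right hvc
  exact hw

theorem IsEdgeCover.exists_center_map_of_minimal (hF : Minimal (IsEdgeCover G) F) :
    ∃ f : V → V, ∀ e ∈ F, ∃ c ∈ e, ∀ v ∈ e, f v = c := by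
  choose center center_mem eq_of_ne_center using
    fun e : F => exists_center_of_minimal hF e.2
  choose edge edge_mem mem_edge using hF.prop.2
  refine ⟨fun v => center ⟨edge v, edge_mem v⟩, fun e he => ⟨center ⟨e, he⟩, center_mem _, ?_⟩⟩
  intro v hv
  by_cases hvc : v = center ⟨e, he⟩
  · by_cases hvc' : v = center ⟨edge v, edge_mem v⟩
    · exact hvc'.symm.trans hvc
    · simp only [eq_of_ne_center ⟨edge v, edge_mem v⟩ v (mem_edge v) hvc' e he hv]
  · simp only [eq_of_ne_center ⟨e, he⟩ v hv hvc (edge v) (edge_mem v) (mem_edge v)]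

end EdgeCover

section Clustering

variable {V ι : Type*} [PseudoMetricSpace V]

/-- The radius of the clustering of `V` that assigns `v` to the cluster `σ v` with center
`c (σ v)`. As a real supremum it is `0` by convention when the distances are unbounded. -/
noncomputable def clusterRadius (σ : V → ι) (c : ι → V) : ℝ :=
  ⨆ v, dist v (c (σ v))

variable (V ι) in
/-- The optimal `k`-center radius of `V`, where `k` is the cardinality of the type `ι` of cluster
labels. -/
noncomputable def optimalRadius : ℝ :=
  sInf {r : ℝ | ∃ (σ : V → ι) (c : ι → V), r = clusterRadius σ c}

/-- The bottleneck nearest-neighbor distance of `G`: the largest distance from a vertex to its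
nearest `G`-neighbor. An isolated vertex contributes the junk value `sInf ∅ = 0`. -/
noncomputable def bottleneckDist (G : SimpleGraph V) : ℝ :=
  ⨆ v : V, sInf {x : ℝ | ∃ u : V, G.Adj v u ∧ x = dist u v}

theorem dist_le_clusterRadius [Finite V] (σ : V → ι) (c : ι → V) (v : V) :
    dist v (c (σ v)) ≤ clusterRadius σ c :=
  le_ciSup (f := fun v => dist v (c (σ v))) (Set.finite_range _).bddAbove v

theorem clusterRadius_comp_le [Finite V] [Nonempty V] (σ : V → ι) (c : ι → V) {f : V → V} {b : ℝ}
    (hf : ∀ v, dist v (f v) ≤ b) : clusterRadius (σ ∘ f) c ≤ b + clusterRadius σ c :=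
  ciSup_le fun v => calc
    dist v (c (σ (f v))) ≤ dist v (f v) + dist (f v) (c (σ (f v))) := dist_triangle _ _ _
    _ ≤ b + clusterRadius σ c := add_le_add (hf v) (dist_le_clusterRadius σ c (f v))

variable (V ι) in
theorem exists_clusterRadius_eq_optimalRadius [Finite V] [Nonempty V] [Nonempty ι] :
    ∃ (σ : V → ι) (c : ι → V), clusterRadius σ c = optimalRadius V ι := by
  have hne : {r : ℝ | ∃ (σ : V → ι) (c : ι → V), r = clusterRadius σ c}.Nonempty :=
    ⟨_, fun _ => Classical.arbitrary ι, fun _ => Classical.arbitrary V, rfl⟩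
  -- The radius depends only on the map `c ∘ σ : V → V`, of which there are finitely many.
  have hfin : {r : ℝ | ∃ (σ : V → ι) (c : ι → V), r = clusterRadius σ c}.Finite := by
    refine (Set.finite_range fun g : V → V => ⨆ v, dist v (g v)).subset ?_
    rintro _ ⟨σ, c, rfl⟩
    exact ⟨c ∘ σ, rfl⟩
  obtain ⟨σ, c, h⟩ := hne.csInf_mem hfin
  exact ⟨σ, c, h.symm⟩

theorem exists_adj_dist_le_bottleneckDist [Finite V] {G : SimpleGraph V} {v : V}
    (hv : ∃ u, G.Adj v u) : ∃ u, G.Adj v u ∧ dist v u ≤ bottleneckDist G := by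
  have hne : {x : ℝ | ∃ u, G.Adj v u ∧ x = dist u v}.Nonempty :=
    let ⟨u, hu⟩ := hv
    ⟨_, u, hu, rfl⟩
  have hfin : {x : ℝ | ∃ u, G.Adj v u ∧ x = dist u v}.Finite := by
    refine (Set.finite_range fun u => dist u v).subset ?_
    rintro _ ⟨u, -, rfl⟩
    exact ⟨u, rfl⟩
  obtain ⟨u, huv, hu⟩ := hne.csInf_mem hfin
  refine ⟨u, huv, ?_⟩
  rw [dist_comm, ← hu]
  exact le_ciSup (f := fun v => sInf {x : ℝ | ∃ u, G.Adj v u ∧ x = dist u v})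
    (Set.finite_range _).bddAbove v

theorem exists_center_map_dist_le [Finite V] {G : SimpleGraph V} {b : ℝ}
    (hG : ∀ v, ∃ u, G.Adj v u ∧ dist v u ≤ b) :
    ∃ f : V → V, (∀ v, ∃ u, G.Adj v u ∧ f u = f v) ∧ ∀ v, dist v (f v) ≤ b := by
  choose g hadj hdist using hG
  obtain ⟨F, hFg, hF⟩ := exists_minimal_le_of_wellFoundedLT _ _ (isEdgeCover_range hadj)
  have dist_le_of_mem : ∀ u v, s(u, v) ∈ F → dist u v ≤ b := by
    intro u v huv
    obtain ⟨w, hw⟩ := hFg huv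
    rcases Sym2.eq_iff.1 hw with ⟨rfl, rfl⟩ | ⟨rfl, rfl⟩
    · exact hdist w
    · exact dist_comm w (g w) ▸ hdist w
  obtain ⟨f, hf⟩ := IsEdgeCover.exists_center_map_of_minimal hF
  have exists_mem_star : ∀ v, ∃ u, s(v, u) ∈ F ∧ f u = f v ∧ (f v = v ∨ f v = u) := by
    intro v
    obtain ⟨u, huv⟩ := hF.prop.exists_mk_mem v
    obtain ⟨c, hc, hfc⟩ := hf _ huv
    have hv : f v = c := hfc v (Sym2.mem_mk_left v u)
    have hu : f u = c := hfc u (Sym2.mem_mk_right v u)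
    exact ⟨u, huv, hu.trans hv.symm, hv ▸ Sym2.mem_iff.1 hc⟩
  refine ⟨f, fun v => ?_, fun v => ?_⟩
  · obtain ⟨u, huv, hfu, -⟩ := exists_mem_star v
    exact ⟨u, hF.prop.1 huv, hfu⟩
  · obtain ⟨u, huv, -, hfv | hfv⟩ := exists_mem_star v
    · rw [hfv, dist_self]
      exact dist_nonneg.trans (hdist v)
    · exact hfv ▸ dist_le_of_mem v u huv

theorem resource_sharing_clustering_exists_general [Finite V] [Nonempty V] [Nonempty ι]
    (G : SimpleGraph V) (hiso : ∀ v, ∃ u, G.Adj v u) :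
    ∃ (σ : V → ι) (c : ι → V), (∀ v, ∃ u, G.Adj v u ∧ σ u = σ v) ∧
      clusterRadius σ c ≤ bottleneckDist G + optimalRadius V ι := by
  obtain ⟨f, hadj, hdist⟩ :=
    exists_center_map_dist_le fun v => exists_adj_dist_le_bottleneckDist (hiso v)
  obtain ⟨σ, c, hopt⟩ := exists_clusterRadius_eq_optimalRadius V ι
  refine ⟨σ ∘ f, c, fun v => ?_, hopt ▸ clusterRadius_comp_le σ c hdist⟩
  obtain ⟨u, huv, hfu⟩ := hadj v
  exact ⟨u, huv, congrArg σ hfu⟩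

end Clustering

/-- There is a `k`-clustering in which every vertex has a `G`-neighbor in its own cluster and
whose radius is at most `b + R`, where `b` is the bottleneck nearest-neighbor distance and `R`
is the optimal `k`-center radius. -/
theorem resource_sharing_clustering_exists {V : Type*} [MetricSpace V] [Fintype V] [Nonempty V]
    (G : SimpleGraph V) (hiso : ∀ v : V, ∃ u : V, G.Adj v u) (k : ℕ) (hk : 1 ≤ k) :
    ∃ (σ : V → Fin k) (c : Fin k → V),
      (∀ v : V, ∃ u : V, G.Adj v u ∧ σ u = σ v) ∧
      (⨆ v : V, dist v (c (σ v))) ≤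
        (⨆ v : V, sInf {x : ℝ | ∃ u : V, G.Adj v u ∧ x = dist u v}) +
          sInf {r : ℝ | ∃ (σ' : V → Fin k) (c' : Fin k → V),
            r = ⨆ v : V, dist v (c' (σ' v))} := by
  have : Nonempty (Fin k) := ⟨0, hk⟩
  exact resource_sharing_clustering_exists_general G hiso
end

section
/- Let (V,d) be a nonempty finite metric space and let F be a set of unordered pairs of distinct points of V such that every point of V lies in some pair of F, every pair of F has an endpoint lying in no other pair of F (the components of (V,F) are stars), and d(u,v) ≤ b for every {u,v} in F. Let c : Fin k → V be such that every v in V satisfies min over i of d(v, c(i)) ≤ R. Then there exists σ : V → Fin k such that σ(u) = σ(v) whenever {u,v} is in F, and d(v, c(σ(v))) ≤ b + R for every v in V. -/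
/-!
Two distinct pairs of `F` sharing a point `v` meet away from their private endpoints, so `v` is the
star center of both. So, once a star center is chosen for each pair, pairs sharing a point have the
same one, and sending each point to its star center is constant on pairs and moves points by at most
`b`. Assign every point to a cluster center near its star center.
-/

section StarForest

variable {V : Type*} {F : Set (Sym2 V)}

/-- A set of unordered pairs is a star forest if every pair has a private endpoint, that is, one
lying in no other pair of the set. Loops `s(v, v)` are allowed. -/
def IsStarForest (F : Set (Sym2 V)) : Prop :=
  ∀ e ∈ F, ∃ y ∈ e, ∀ e' ∈ F, y ∈ e' → e' = e

/-- `x` is a center of the star containing the pair `e`: the other endpoint of `e` lies in no other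
pair of `F`. When `e` is a star by itself, both of its endpoints are centers. -/
def IsStarCenter (F : Set (Sym2 V)) (e : Sym2 V) (x : V) : Prop :=
  ∃ y, e = s(x, y) ∧ ∀ e' ∈ F, y ∈ e' → e' = e

theorem IsStarForest.exists_isStarCenter (hF : IsStarForest F) {e : Sym2 V} (he : e ∈ F) :
    ∃ x, IsStarCenter F e x := by
  obtain ⟨y, ⟨x, hyx⟩, hy⟩ := hF e he
  exact ⟨x, y, hyx.trans Sym2.eq_swap, hy⟩

theorem IsStarCenter.eq_of_mem_of_mem {e e' : Sym2 V} {x v : V} (hx : IsStarCenter F e x)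
    (he' : e' ∈ F) (hne : e' ≠ e) (hv : v ∈ e) (hv' : v ∈ e') : v = x := by
  obtain ⟨y, rfl, hy⟩ := hx
  refine (Sym2.mem_iff.1 hv).resolve_right ?_
  rintro rfl
  exact hne (hy e' he' hv')

theorem IsStarCenter.eq_or_mk_mem {e : Sym2 V} {x v : V} (hx : IsStarCenter F e x)
    (he : e ∈ F) (hv : v ∈ e) : x = v ∨ s(v, x) ∈ F := by
  obtain ⟨y, rfl, -⟩ := hx
  obtain rfl | rfl := Sym2.mem_iff.1 hv
  · exact .inl rfl
  · exact .inr (Sym2.eq_swap ▸ he)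

theorem IsStarForest.exists_center_map (hF : IsStarForest F) :
    ∃ p : V → V, (∀ u v, s(u, v) ∈ F → p u = p v) ∧ ∀ v, p v = v ∨ s(v, p v) ∈ F := by
  choose center hcenter using fun e (he : e ∈ F) ↦ hF.exists_isStarCenter he
  have center_eq : ∀ e (he : e ∈ F) e' (he' : e' ∈ F) v, v ∈ e → v ∈ e' →
      center e he = center e' he' := by
    intro e he e' he' v hv hv'
    obtain rfl | hne := eq_or_ne e e'
    · rfl
    · exact ((hcenter e he).eq_of_mem_of_mem he' hne.symm hv hv').symm.trans
        ((hcenter e' he').eq_of_mem_of_mem he hne hv' hv)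
  have exists_center : ∀ v, ∃ x, (∀ e (he : e ∈ F), v ∈ e → center e he = x) ∧
      (x = v ∨ s(v, x) ∈ F) := by
    intro v
    by_cases hcov : ∃ e ∈ F, v ∈ e
    · obtain ⟨e, he, hv⟩ := hcov
      exact ⟨center e he, fun e' he' hv' ↦ center_eq e' he' e he v hv' hv,
        (hcenter e he).eq_or_mk_mem he hv⟩
    · exact ⟨v, fun e he hv ↦ absurd ⟨e, he, hv⟩ hcov, .inl rfl⟩
  choose p hp hp_mem using exists_center
  exact ⟨p, fun u v he ↦ (hp u _ he (Sym2.mem_mk_left u v)).symm.trans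
    (hp v _ he (Sym2.mem_mk_right u v)), hp_mem⟩

end StarForest

theorem star_cover_cluster_assignment_general {V ι : Type*} [PseudoMetricSpace V]
    {F : Set (Sym2 V)} (hF : IsStarForest F)
    {b : ℝ} (hb₀ : 0 ≤ b) (hb : ∀ u v : V, s(u, v) ∈ F → dist u v ≤ b)
    {c : ι → V} {R : ℝ} (hc : ∀ v : V, ∃ i, dist v (c i) ≤ R) :
    ∃ σ : V → ι,
      (∀ u v : V, s(u, v) ∈ F → σ u = σ v) ∧
      ∀ v : V, dist v (c (σ v)) ≤ b + R := by
  obtain ⟨p, hp_const, hp_mem⟩ := hF.exists_center_map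
  choose near hnear using hc
  have dist_center_le (v : V) : dist v (p v) ≤ b := by
    obtain h | h := hp_mem v
    · rwa [h, dist_self]
    · exact hb v (p v) h
  refine ⟨near ∘ p, fun u v huv ↦ congrArg near (hp_const u v huv), fun v ↦ ?_⟩
  calc dist v (c (near (p v)))
      ≤ dist v (p v) + dist (p v) (c (near (p v))) := dist_triangle _ _ _
    _ ≤ b + R := add_le_add (dist_center_le v) (hnear (p v))

/-- Assigning each star of a star-shaped edge cover entirely to the cluster of a center near
its star center keeps every pair co-clustered while increasing the radius by at most `b`. -/
theorem star_cover_cluster_assignment {V : Type*} [MetricSpace V] [Fintype V] [Nonempty V]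
    (F : Set (Sym2 V)) (hdiag : ∀ e ∈ F, ¬ e.IsDiag)
    (hcover : ∀ v : V, ∃ e ∈ F, v ∈ e)
    (hstar : ∀ e ∈ F, ∃ v ∈ e, ∀ e' ∈ F, v ∈ e' → e' = e)
    (b : ℝ) (hb : ∀ u v : V, s(u, v) ∈ F → dist u v ≤ b)
    {k : ℕ} (c : Fin k → V) (R : ℝ) (hc : ∀ v : V, ∃ i : Fin k, dist v (c i) ≤ R) :
    ∃ σ : V → Fin k,
      (∀ u v : V, s(u, v) ∈ F → σ u = σ v) ∧
      ∀ v : V, dist v (c (σ v)) ≤ b + R := by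
  obtain ⟨_, he, w, rfl⟩ := hcover (Classical.arbitrary V)
  exact star_cover_cluster_assignment_general hstar (dist_nonneg.trans (hb _ w he)) hb hc
end

section
/- Let (V,d) be a finite metric space, X ⊆ V, and let (σ*, c*) be a k-clustering of (V,d) of radius r* such that for every i in Fin k, the set {x ∈ X : σ*(x) = i} has cardinality exactly m, where m ≥ 1. Then there exist τ : X → Fin k with every fiber of τ of cardinality exactly m, and χ : Fin k → X, such that d(x, χ(τ(x))) ≤ 2 r* for every x in X. -/
theorem dist_section_le_two_mul {α V ι : Type*} [PseudoMetricSpace V] {f : α → V} {τ : α → ι}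
    {χ : ι → α} (hχ : Function.RightInverse χ τ) {c : ι → V} {r : ι → ℝ}
    (hr : ∀ a, dist (f a) (c (τ a)) ≤ r (τ a)) (a : α) :
    dist (f a) (f (χ (τ a))) ≤ 2 * r (τ a) := by
  have dist_new_center : dist (f (χ (τ a))) (c (τ a)) ≤ r (τ a) := by
    simpa only [hχ (τ a)] using hr (χ (τ a))
  calc
    dist (f a) (f (χ (τ a))) ≤ dist (f a) (c (τ a)) + dist (f (χ (τ a))) (c (τ a)) :=
      dist_triangle_right _ _ _
    _ ≤ r (τ a) + r (τ a) := add_le_add (hr a) dist_new_center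
    _ = 2 * r (τ a) := (two_mul _).symm

theorem ncard_fiber_restrict {V ι : Type*} (X : Set V) (σ : V → ι) (i : ι) :
    {x : X | σ x = i}.ncard = {v : V | v ∈ X ∧ σ v = i}.ncard := by
  rw [Set.ofPred_and, Set.inter_comm]
  exact Set.ncard_subtype (· ∈ X) {v | σ v = i}

theorem balanced_restriction_to_experts_general {V ι : Type*} [PseudoMetricSpace V]
    (X : Set V) (σ : V → ι) (c : ι → V) (r : ι → ℝ)
    (hr : ∀ x ∈ X, dist x (c (σ x)) ≤ r (σ x))
    (m : ι → ℕ) (hm : ∀ i, 1 ≤ m i) (hbal : ∀ i, {x : V | x ∈ X ∧ σ x = i}.ncard = m i) :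
    ∃ (τ : X → ι) (χ : ι → X),
      (∀ i, {x : X | τ x = i}.ncard = m i) ∧
      ∀ x : X, dist (x : V) (χ (τ x) : V) ≤ 2 * r (τ x) := by
  have ncard_fiber (i : ι) : {x : X | σ x = i}.ncard = m i :=
    (ncard_fiber_restrict X σ i).trans (hbal i)
  have surjective_restrict : Function.Surjective fun x : X => σ x := fun i =>
    Set.nonempty_of_ncard_ne_zero ((ncard_fiber i).trans_ne (Nat.one_le_iff_ne_zero.mp (hm i)))
  obtain ⟨χ, hχ⟩ := surjective_restrict.hasRightInverse
  exact ⟨fun x => σ x, χ, ncard_fiber,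
    dist_section_le_two_mul hχ fun x : X => hr x x.property⟩

/-- Restricting an optimal balanced clustering of `V` to the expert set `X` yields a balanced
clustering of `X` with centers in `X` of radius at most `2 r`. -/
theorem balanced_restriction_to_experts {V : Type*} [MetricSpace V] [Fintype V]
    (X : Set V) {k : ℕ} (σ : V → Fin k) (c : Fin k → V) (r : ℝ)
    (hr : (⨆ v : V, dist v (c (σ v))) = r)
    (m : ℕ) (hm : 1 ≤ m) (hbal : ∀ i : Fin k, {x : V | x ∈ X ∧ σ x = i}.ncard = m) :
    ∃ (τ : X → Fin k) (χ : Fin k → X),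
      (∀ i : Fin k, {x : X | τ x = i}.ncard = m) ∧
      ∀ x : X, dist (x : V) (χ (τ x) : V) ≤ 2 * r :=
  balanced_restriction_to_experts_general X σ c (fun _ => r)
    (fun x _ => (Finite.le_ciSup (fun v => dist v (c (σ v))) x).trans_eq hr)
    (fun _ => m) (fun _ => hm) hbal
end

section
/- Let (V,d) be a finite metric space, X ⊆ V, k ≥ 1, and α ≥ 1. Suppose there is a k-clustering (σ*, c*) of (V,d) of radius r* such that every cluster contains exactly m ≥ 1 points of X. Let OPT_X denote the minimum radius over all pairs (τ, χ) with τ : X → Fin k having every fiber of cardinality exactly m and χ : Fin k → X, where the radius of (τ, χ) is max over x in X of d(x, χ(τ(x))). Let (τ0, χ0) be such a pair with radius at most α · OPT_X. Then there exists σ : V → Fin k with σ(x) = τ0(x) for every x in X (so every cluster of σ contains exactly m points of X) and d(u, χ0(σ(u))) ≤ (2α + 2) r* for every u in V. -/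
/-!
The clusters of the given clustering of radius `r*` all contain experts, and two points of the same
cluster are at distance at most `2 r*`. Choosing an expert in each cluster as its center thus shows
`OPT_X ≤ 2 r*`, and sending each non-expert to an expert of its own cluster retracts `V` onto `X`
with displacement at most `2 r*`. Composing this retraction with the `α`-approximate assignment of
the experts gives radius at most `2 r* + α * OPT_X`.
-/

open Function

section Clustering

variable {W ι : Type*}

/-- The radius of the clustering of `W` with assignment `σ` and centers `c`, the supremum being the
paper's maximum for finite `W`. It is `0` if the distances to the centers are unbounded. -/
noncomputable def clusteringRadius [PseudoMetricSpace W] (σ : W → ι) (c : ι → W) : ℝ :=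
  ⨆ w, dist w (c (σ w))

/-- The assignment `τ` puts exactly `m i` points into the `i`-th cluster. The balanced assignments
of the paper are those with constant `m`. By the convention of `Set.ncard`, an infinite cluster has
size `0`. -/
def HasClusterSizes (τ : W → ι) (m : ι → ℕ) : Prop :=
  ∀ i, {w | τ w = i}.ncard = m i

/-- The optimal radius of a clustering of `W` with cluster sizes `m`; for constant `m` this is the
optimum of balanced `k`-center, the paper's `OPT_X` when `W = X`. It is `0` if no clustering has
these sizes. -/
noncomputable def optRadius (W : Type*) [PseudoMetricSpace W] (m : ι → ℕ) : ℝ :=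
  sInf {ρ | ∃ (τ : W → ι) (χ : ι → W), HasClusterSizes τ m ∧ ρ = clusteringRadius τ χ}

namespace HasClusterSizes

variable {τ : W → ι} {m : ι → ℕ}

theorem surjective (hτ : HasClusterSizes τ m) (hm : ∀ i, m i ≠ 0) : Surjective τ :=
  fun i => Set.nonempty_of_ncard_ne_zero ((hτ i).trans_ne (hm i))

theorem finite [Finite ι] (hτ : HasClusterSizes τ m) (hm : ∀ i, m i ≠ 0) : Finite W :=
  Set.finite_univ_iff.mp <| Set.finite_univ.preimage' (f := τ) fun i _ =>
    Set.finite_of_ncard_ne_zero ((hτ i).trans_ne (hm i))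

end HasClusterSizes

theorem hasClusterSizes_domRestrict_iff {X : Set W} {σ : W → ι} {m : ι → ℕ} :
    HasClusterSizes (X.domRestrict σ) m ↔ ∀ i, {x | x ∈ X ∧ σ x = i}.ncard = m i := by
  have h_card (i : ι) : {x : X | σ x = i}.ncard = {x | x ∈ X ∧ σ x = i}.ncard :=
    (Set.ncard_subtype (· ∈ X) {x | σ x = i}).trans (congrArg Set.ncard (Set.inter_comm ..))
  exact forall_congr' fun i => Eq.congr_left (h_card i)

variable [PseudoMetricSpace W] {σ : W → ι} {c : ι → W} {r : ℝ}

theorem clusteringRadius_nonneg : 0 ≤ clusteringRadius σ c :=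
  Real.iSup_nonneg fun _ => dist_nonneg

theorem dist_le_clusteringRadius [Finite W] (w : W) : dist w (c (σ w)) ≤ clusteringRadius σ c :=
  le_ciSup (f := fun w => dist w (c (σ w))) (Set.finite_range _).bddAbove w

theorem optRadius_le_clusteringRadius {m : ι → ℕ} (hσ : HasClusterSizes σ m) :
    optRadius W m ≤ clusteringRadius σ c := by
  refine csInf_le ⟨0, ?_⟩ ⟨σ, c, hσ, rfl⟩
  rintro _ ⟨τ, χ, -, rfl⟩
  exact clusteringRadius_nonneg

theorem dist_le_two_mul_of_same_cluster (hr : ∀ w, dist w (c (σ w)) ≤ r) {v w : W}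
    (hvw : σ v = σ w) : dist v w ≤ 2 * r :=
  calc
    dist v w ≤ dist v (c (σ v)) + dist w (c (σ v)) := dist_triangle_right ..
    _ ≤ r + r := add_le_add (hr v) (hvw ▸ hr w)
    _ = 2 * r := (two_mul r).symm

end Clustering

section TeamFormation

variable {V ι : Type*} [PseudoMetricSpace V] {X : Set V} {σ : V → ι} {c : ι → V} {r : ℝ}

theorem optRadius_subtype_le_two_mul [Nonempty X] {m : ι → ℕ} (hm : ∀ i, m i ≠ 0)
    (hr : ∀ v, dist v (c (σ v)) ≤ r) (hσ : HasClusterSizes (X.domRestrict σ) m) :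
    optRadius X m ≤ 2 * r := by
  obtain ⟨expert, h_expert⟩ := (hσ.surjective hm).hasRightInverse
  calc
    optRadius X m ≤ clusteringRadius (X.domRestrict σ) expert := optRadius_le_clusteringRadius hσ
    _ ≤ 2 * r := ciSup_le fun x => dist_le_two_mul_of_same_cluster hr (h_expert (σ x)).symm

theorem exists_retraction_dist_le_two_mul (hr : ∀ v, dist v (c (σ v)) ≤ r)
    (hσ : Surjective (X.domRestrict σ)) :
    ∃ p : V → X, LeftInverse p Subtype.val ∧ ∀ v, dist v (p v : V) ≤ 2 * r := by
  have h_expert (v : V) : ∃ y : X, (∀ hv : v ∈ X, y = ⟨v, hv⟩) ∧ σ v = σ y := by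
    by_cases hv : v ∈ X
    · exact ⟨⟨v, hv⟩, fun _ => rfl, rfl⟩
    · obtain ⟨y, hy⟩ := hσ (σ v)
      exact ⟨y, fun hv' => absurd hv' hv, hy.symm⟩
  choose p hp_self hp_cluster using h_expert
  exact ⟨p, fun x => hp_self x x.2, fun v => dist_le_two_mul_of_same_cluster hr (hp_cluster v)⟩

theorem team_formation_guarantee_general [Finite ι] {α : ℝ} (hα : 0 ≤ α)
    (hr : ∀ v, dist v (c (σ v)) ≤ r) {m : ι → ℕ} (hm : ∀ i, m i ≠ 0)
    (hσ : HasClusterSizes (X.domRestrict σ) m) {τ : X → ι} {χ : ι → X}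
    (hτ : clusteringRadius τ χ ≤ α * optRadius X m) :
    ∃ σ' : V → ι, X.domRestrict σ' = τ ∧ ∀ u, dist u (χ (σ' u) : V) ≤ (2 * α + 2) * r := by
  obtain ⟨p, hp, hp_dist⟩ := exists_retraction_dist_le_two_mul hr (hσ.surjective hm)
  refine ⟨τ ∘ p, funext fun x => congrArg τ (hp x), fun u => ?_⟩
  have : Finite X := hσ.finite hm
  have : Nonempty X := ⟨p u⟩
  calc
    dist u (χ (τ (p u)) : V) ≤ dist u (p u : V) + dist (p u) (χ (τ (p u))) := dist_triangle ..
    _ ≤ 2 * r + clusteringRadius τ χ := add_le_add (hp_dist u) (dist_le_clusteringRadius (p u))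
    _ ≤ 2 * r + α * (2 * r) := by
      gcongr
      exact hτ.trans (mul_le_mul_of_nonneg_left (optRadius_subtype_le_two_mul hm hr hσ) hα)
    _ = (2 * α + 2) * r := by ring

end TeamFormation

/-- Team-formation makeshift guarantee: from an `α`-approximate balanced `k`-center solution
on the expert set `X`, one obtains a clustering of `V` that is balanced on `X` and whose
radius (w.r.t. the chosen centers) is at most `(2α + 2) r*`, where `r*` is the radius of a
balanced clustering of `V`. -/
theorem team_formation_guarantee {V : Type*} [MetricSpace V] [Fintype V]
    (X : Set V) (k : ℕ) (hk : 1 ≤ k) (α : ℝ) (hα : 1 ≤ α)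
    (σstar : V → Fin k) (cstar : Fin k → V) (rstar : ℝ)
    (hrstar : (⨆ v : V, dist v (cstar (σstar v))) = rstar)
    (m : ℕ) (hm : 1 ≤ m)
    (hbal : ∀ i : Fin k, {x : V | x ∈ X ∧ σstar x = i}.ncard = m)
    (τ0 : X → Fin k) (χ0 : Fin k → X)
    (hτ0bal : ∀ i : Fin k, {x : X | τ0 x = i}.ncard = m)
    (hτ0 : (⨆ x : X, dist (x : V) (χ0 (τ0 x) : V)) ≤
      α * sInf {ρ : ℝ | ∃ (τ : X → Fin k) (χ : Fin k → X),
        (∀ i : Fin k, {x : X | τ x = i}.ncard = m) ∧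
        ρ = ⨆ x : X, dist (x : V) (χ (τ x) : V)}) :
    ∃ σ : V → Fin k,
      (∀ x : X, σ (x : V) = τ0 x) ∧
      (∀ i : Fin k, {x : V | x ∈ X ∧ σ x = i}.ncard = m) ∧
      ∀ u : V, dist u (χ0 (σ u) : V) ≤ (2 * α + 2) * rstar := by
  obtain ⟨σ, rfl, hσ⟩ := team_formation_guarantee_general (m := fun _ => m) (zero_le_one.trans hα)
    (fun v => (dist_le_clusteringRadius v).trans_eq hrstar) (fun _ => Nat.one_le_iff_ne_zero.mp hm)
    (hasClusterSizes_domRestrict_iff.mpr hbal) hτ0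
  exact ⟨σ, fun _ => rfl, hasClusterSizes_domRestrict_iff.mp hτ0bal, hσ⟩
end
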